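/- Let A ⊆ ℕ be a quasi-maximal c.e. set, i.e., an intersection of finitely many maximal c.e. sets. Then E_A is not high for the computable FS-jump; equivalently, =^{ce} is not computably reducible to (E_A)⁺. -/

import Mathlib

/-- The `e`-th partial computable function. -/
def phi (e : ℕ) : ℕ →. ℕ :=
  Nat.Partrec.Code.eval (Denumerable.ofNat Nat.Partrec.Code e)

/-- `W_e`, the `e`-th c.e. set: the domain of `φ_e`. -/
def WSet (e : ℕ) : Set ℕ := (phi e).Dom

/-- The `E`-equivalence class of `k`. -/
def classOf (E : ℕ → ℕ → Prop) (k : ℕ) : Set ℕ := {x | E k x}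

/-- Computable reducibility of binary relations on ℕ. -/
def Reduces (E F : ℕ → ℕ → Prop) : Prop :=
  ∃ f : ℕ → ℕ, Computable f ∧ ∀ m n, E m n ↔ F (f m) (f n)

/-- The computable FS-jump of `E`: `e E⁺ e'` iff the set of `E`-classes of elements
of `ran φ_e` equals the set of `E`-classes of elements of `ran φ_{e'}`. -/
def FSJump (E : ℕ → ℕ → Prop) : ℕ → ℕ → Prop :=
  fun e e' => classOf E '' (phi e).ran = classOf E '' (phi e').ran

/-- Equality of c.e. sets: `e =^{ce} e'` iff `W_e = W_{e'}`. -/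
def eqCE : ℕ → ℕ → Prop := fun e e' => WSet e = WSet e'

/-- A set is c.e. if it is `W_e` for some `e`. -/
def CeSet (S : Set ℕ) : Prop := ∃ e : ℕ, S = WSet e

/-- `E_A`: `m E_A n` iff `m = n` or both `m, n ∈ A`. -/
def EA (A : Set ℕ) : ℕ → ℕ → Prop :=
  fun m n => m = n ∨ (m ∈ A ∧ n ∈ A)

/-- A c.e. set `A` is maximal if its complement is infinite and for every c.e. `W`,
either `W \ A` or `Wᶜ \ A` is finite. -/
def MaximalSet (A : Set ℕ) : Prop :=
  CeSet A ∧ Aᶜ.Infinite ∧ ∀ W : Set ℕ, CeSet W → (W \ A).Finite ∨ (Wᶜ \ A).Finite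

/-- `A` is quasi-maximal: an intersection of finitely many maximal c.e. sets. -/
def QuasiMaximalSet (A : Set ℕ) : Prop :=
  ∃ k : ℕ, ∃ M : Fin (k + 1) → Set ℕ, (∀ i, MaximalSet (M i)) ∧ A = ⋂ i, M i

/-!
Let `f` reduce `=^{ce}` to `(E_A)⁺` and write `R e = ran φ_{f e}`. For `x ∉ A` the set of indices
`e` with `x ∈ R e` is c.e. and depends only on `W_e`, so by the monotonicity half of the
Rice–Shapiro theorem `W_m ⊆ W_n` implies `R m \ A ⊆ R n \ A`. If moreover `W_n \ W_m` is infinite,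
then the infinitely many c.e. sets `W_m ∪ {x}` lie between `W_m` and `W_n`; since the `(E_A)⁺`-class
of `e` is determined by `R e \ A` together with whether `R e` meets `A`, the set
`(R n \ R m) \ A` must be infinite. A chain of c.e. sets with infinite gaps thus yields c.e. sets
increasing outside `A`, each adding infinitely many points of `Aᶜ`. When finitely many cohesive
sets cover `Aᶜ`, the pigeonhole principle gives one of them which receives infinitely many points
at two different steps, and the c.e. set between these steps splits it into two infinite parts.
-/

open Nat.Partrec (Code)

/-! ### Recursively enumerable predicates -/

section REPred

variable {α β : Type*} [Primcodable α] [Primcodable β]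

theorem rePred_comp {p : β → Prop} {g : α → β} (hp : REPred p) (hg : Computable g) :
    REPred fun a => p (g a) :=
  Partrec.comp hp hg

theorem rePred_or {p q : α → Prop} (hp : REPred p) (hq : REPred q) :
    REPred fun a => p a ∨ q a := by
  obtain ⟨k, hk, hdom⟩ := Partrec.merge' hp hq
  refine hk.dom_re.of_eq fun a => (hdom a).2.trans ?_
  simp only [Part.assert, Part.some_dom, exists_prop, and_true]

theorem rePred_and {p q : α → Prop} (hp : REPred p) (hq : REPred q) :
    REPred fun a => p a ∧ q a := by
  refine (Partrec.bind hp (Partrec.comp hq Computable.fst).to₂).dom_re.of_eq fun a => ?_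
  simp only [Part.bind_dom, Part.assert, Part.some_dom, exists_prop, and_true]

theorem rePred_exists_nat {p : α → ℕ → Prop} (hp : ComputablePred fun q : α × ℕ => p q.1 q.2) :
    REPred fun a => ∃ n, p a n := by
  classical
  have search : Partrec fun a => Nat.rfind fun n => Part.some (decide (p a n)) :=
    Partrec.rfind hp.decide.partrec
  refine search.dom_re.of_eq fun a => Nat.rfind_dom.trans ?_
  simp

theorem rePred_eval_dom : REPred fun q : Code × ℕ => (q.1.eval q.2).Dom :=
  Code.eval_part.dom_re

theorem rePred_mem_ran_eval : REPred fun q : Code × ℕ => q.2 ∈ q.1.eval.ran := by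
  have step : Primrec fun a : (Code × ℕ) × ℕ =>
      Code.evaln a.2.unpair.1 a.1.1 a.2.unpair.2 :=
    Code.primrec_evaln.comp <|
      ((Primrec.fst.comp (Primrec.unpair.comp .snd)).pair (Primrec.fst.comp .fst)).pair
        (Primrec.snd.comp (Primrec.unpair.comp .snd))
  have halts : PrimrecPred fun a : (Code × ℕ) × ℕ =>
      Code.evaln a.2.unpair.1 a.1.1 a.2.unpair.2 = some a.1.2 :=
    Primrec.eq.comp step (Primrec.option_some.comp (Primrec.snd.comp .fst))
  -- Dovetailing: `n` codes a pair of a step bound and an argument.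
  refine (rePred_exists_nat (p := fun q n => Code.evaln n.unpair.1 q.1 n.unpair.2 = some q.2)
    halts.computablePred).of_eq fun q => ⟨?_, ?_⟩
  · rintro ⟨n, hn⟩
    exact ⟨n.unpair.2, Code.evaln_sound hn⟩
  · rintro ⟨z, hz⟩
    obtain ⟨k, hk⟩ := Code.evaln_complete.1 hz
    exact ⟨Nat.pair k z, by simpa using hk⟩

end REPred

/-! ### C.e. sets and their indices -/

theorem WSet_encode (c : Code) : WSet (Encodable.encode c) = c.eval.Dom := by
  simp only [WSet, phi, Denumerable.ofNat_encode]

theorem rePred_mem_WSet (e : ℕ) : REPred fun x => x ∈ WSet e :=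
  (rePred_comp rePred_eval_dom ((Computable.const (Denumerable.ofNat Code e)).pair .id) :)

theorem rePred_mem_ran_phi : REPred fun q : ℕ × ℕ => q.2 ∈ (phi q.1).ran :=
  (rePred_comp rePred_mem_ran_eval (((Computable.ofNat Code).comp .fst).pair .snd) :)

theorem exists_WSet_eq_setOf {p : ℕ → ℕ → Prop} (hp : REPred fun q : ℕ × ℕ => p q.1 q.2) :
    ∃ e, WSet e = {x | p e x} := by
  have semidecide : Partrec₂ fun (c : Code) (x : ℕ) =>
      (Part.assert (p (Encodable.encode c) x) fun _ => Part.some ()).map fun _ => 0 :=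
    (Partrec.comp hp ((Computable.encode.comp .fst).pair .snd)).map (Computable.const 0).to₂
  obtain ⟨c, hc⟩ := Code.fixed_point₂ semidecide
  refine ⟨Encodable.encode c, Set.ext fun x => ?_⟩
  rw [WSet_encode, hc]
  simp [Part.assert]

theorem ceSet_setOf {p : ℕ → Prop} (hp : REPred p) : CeSet {x | p x} := by
  obtain ⟨e, he⟩ := exists_WSet_eq_setOf (p := fun _ x => p x) (rePred_comp hp .snd)
  exact ⟨e, he.symm⟩

theorem ceSet_ran_phi (e : ℕ) : CeSet (phi e).ran :=
  ceSet_setOf (rePred_comp rePred_mem_ran_phi ((Computable.const e).pair .id) :)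

theorem ceSet_insert_WSet (x e : ℕ) : CeSet (insert x (WSet e)) :=
  ceSet_setOf (rePred_or (Primrec.eq.comp .id (.const x)).computablePred.to_re (rePred_mem_WSet e))

-- By the recursion theorem some `W_e` is `W_n` or `W_m` according to whether `P e` holds.
theorem rePred_mono_of_WSet_congr {P : ℕ → Prop} (hP : REPred P)
    (congr : ∀ m n, WSet m = WSet n → P m → P n) {m n : ℕ} (hmn : WSet m ⊆ WSet n) (hm : P m) :
    P n := by
  obtain ⟨e, he⟩ := exists_WSet_eq_setOf (p := fun e x => x ∈ WSet m ∨ (x ∈ WSet n ∧ P e)) <|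
    rePred_or (rePred_comp (rePred_mem_WSet m) .snd) <|
      rePred_and (rePred_comp (rePred_mem_WSet n) .snd) (rePred_comp hP .fst)
  by_cases hPe : P e
  · refine congr e n ?_ hPe
    rw [he]
    ext x
    simpa [hPe] using @hmn x
  · refine absurd (congr m e ?_ hm) hPe
    simp [he, hPe]

theorem exists_ceSet_monotone_infinite_sdiff :
    ∃ V : ℕ → Set ℕ, (∀ j, CeSet (V j)) ∧ Monotone V ∧ ∀ j, (V (j + 1) \ V j).Infinite := by
  refine ⟨fun j => {x | x.unpair.1 < j}, fun j => ?_, fun i j hij x hx => ?_, fun j => ?_⟩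
  · exact ceSet_setOf <|
      (Primrec.nat_lt.comp (Primrec.fst.comp .unpair) (.const j)).computablePred.to_re
  · exact lt_of_lt_of_le hx hij
  · refine Set.infinite_of_injective_forall_mem (f := Nat.pair j) ?_ fun s => ?_
    · exact fun s t hst => (Nat.pair_eq_pair.1 hst).2
    · simp

/-! ### The jump of `E_A` -/

theorem classOf_eq_classOf_iff {E : ℕ → ℕ → Prop} (hE : Equivalence E) {x y : ℕ} :
    classOf E x = classOf E y ↔ E x y := by
  refine ⟨fun h => ?_, fun hxy => Set.ext fun z => ?_⟩
  · exact h.symm.subset (hE.refl y)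
  · exact ⟨hE.trans (hE.symm hxy), hE.trans hxy⟩

theorem mem_biUnion_classOf_iff {E : ℕ → ℕ → Prop} (hE : Equivalence E) {S : Set ℕ} {x : ℕ} :
    x ∈ ⋃ y ∈ S, classOf E y ↔ classOf E x ∈ classOf E '' S := by
  simp only [Set.mem_iUnion, Set.mem_image, classOf_eq_classOf_iff hE, exists_prop]
  rfl

theorem fsJump_iff_biUnion_classOf_eq {E : ℕ → ℕ → Prop} (hE : Equivalence E) {a b : ℕ} :
    FSJump E a b ↔ ⋃ y ∈ (phi a).ran, classOf E y = ⋃ y ∈ (phi b).ran, classOf E y := by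
  refine ⟨fun h => ?_, fun h => Set.ext fun C => ⟨?_, ?_⟩⟩
  · rw [← Set.sUnion_image, ← Set.sUnion_image, show _ = _ from h]
  · rintro ⟨x, hx, rfl⟩
    rw [← mem_biUnion_classOf_iff hE, ← h, mem_biUnion_classOf_iff hE]
    exact Set.mem_image_of_mem _ hx
  · rintro ⟨x, hx, rfl⟩
    rw [← mem_biUnion_classOf_iff hE, h, mem_biUnion_classOf_iff hE]
    exact Set.mem_image_of_mem _ hx

section EA

variable {A : Set ℕ}

theorem equivalence_EA (A : Set ℕ) : Equivalence (EA A) where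
  refl _ := .inl rfl
  symm := by grind [EA]
  trans := by grind [EA]

theorem mem_biUnion_classOf_EA_iff {S : Set ℕ} {x : ℕ} :
    x ∈ ⋃ y ∈ S, classOf (EA A) y ↔ x ∈ S ∨ (x ∈ A ∧ (S ∩ A).Nonempty) := by
  simp only [Set.mem_iUnion, classOf, EA, Set.mem_ofPred_eq, Set.Nonempty, Set.mem_inter_iff]
  grind

theorem biUnion_classOf_EA_eq_iff {S T : Set ℕ} :
    ⋃ y ∈ S, classOf (EA A) y = ⋃ y ∈ T, classOf (EA A) y ↔
      S \ A = T \ A ∧ ((S ∩ A).Nonempty ↔ (T ∩ A).Nonempty) := by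
  simp only [Set.ext_iff, mem_biUnion_classOf_EA_iff, Set.mem_sdiff, Set.Nonempty,
    Set.mem_inter_iff]
  grind

theorem fsJump_EA_iff {a b : ℕ} :
    FSJump (EA A) a b ↔ (phi a).ran \ A = (phi b).ran \ A ∧
      (((phi a).ran ∩ A).Nonempty ↔ ((phi b).ran ∩ A).Nonempty) :=
  (fsJump_iff_biUnion_classOf_eq (equivalence_EA A)).trans biUnion_classOf_EA_eq_iff

end EA

/-! ### Reductions of `=^{ce}` to the jump of `E_A` -/

theorem finite_Icc_of_finite_sdiff {α : Type*} {S T : Set α} (h : (T \ S).Finite) :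
    (Set.Icc S T).Finite := by
  refine (h.finite_subsets.image (S ∪ ·)).subset fun X hX => ⟨X \ S, ?_, ?_⟩
  · exact Set.sdiff_subset_sdiff_left hX.2
  · exact Set.union_sdiff_cancel hX.1

section Reduction

variable {A : Set ℕ} {f : ℕ → ℕ}

theorem ran_sdiff_subset_of_WSet_subset (hf : Computable f)
    (hred : ∀ m n, eqCE m n ↔ FSJump (EA A) (f m) (f n)) {m n : ℕ} (hmn : WSet m ⊆ WSet n) :
    (phi (f m)).ran \ A ⊆ (phi (f n)).ran \ A := by
  rintro x ⟨hxm, hxA⟩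
  have hre : REPred fun e => x ∈ (phi (f e)).ran :=
    (rePred_comp rePred_mem_ran_phi (hf.pair (Computable.const x)) :)
  have congr (a b : ℕ) (hab : WSet a = WSet b) (hxa : x ∈ (phi (f a)).ran) :
      x ∈ (phi (f b)).ran :=
    ((fsJump_EA_iff.1 ((hred a b).1 hab)).1.subset ⟨hxa, hxA⟩).1
  exact ⟨rePred_mono_of_WSet_congr hre congr hmn hxm, hxA⟩

theorem infinite_ran_sdiff_of_infinite_WSet_sdiff (hf : Computable f)
    (hred : ∀ m n, eqCE m n ↔ FSJump (EA A) (f m) (f n)) {m n : ℕ} (hmn : WSet m ⊆ WSet n)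
    (hinf : (WSet n \ WSet m).Infinite) :
    (((phi (f n)).ran \ A) \ ((phi (f m)).ran \ A)).Infinite := by
  intro hfin
  choose e he using fun x => ceSet_insert_WSet x m
  let invariant (x : ℕ) : Set ℕ × Prop :=
    ((phi (f (e x))).ran \ A, ((phi (f (e x))).ran ∩ A).Nonempty)
  have hmaps : Set.MapsTo invariant (WSet n \ WSet m)
      (Set.Icc ((phi (f m)).ran \ A) ((phi (f n)).ran \ A) ×ˢ Set.univ) := by
    refine fun x hx => ⟨⟨?_, ?_⟩, Set.mem_univ _⟩ <;>
      refine ran_sdiff_subset_of_WSet_subset hf hred ?_ <;> rw [← he]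
    · exact Set.subset_insert x _
    · exact Set.insert_subset hx.1 hmn
  obtain ⟨x, hx, y, -, hxy, heq⟩ := hinf.exists_ne_map_eq_of_mapsTo hmaps
    ((finite_Icc_of_finite_sdiff hfin).prod Set.finite_univ)
  have hjump : FSJump (EA A) (f (e x)) (f (e y)) :=
    fsJump_EA_iff.2 ⟨congrArg Prod.fst heq, iff_of_eq (congrArg Prod.snd heq)⟩
  have hWSet : insert x (WSet m) = insert y (WSet m) := by
    rw [he, he]
    exact (hred _ _).2 hjump
  rcases hWSet.subset (Set.mem_insert x _) with h | h
  exacts [hxy h, hx.2 h]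

end Reduction

theorem exists_ceSet_chain_of_reduces {A : Set ℕ} (h : Reduces eqCE (FSJump (EA A))) :
    ∃ R : ℕ → Set ℕ, (∀ j, CeSet (R j)) ∧ Monotone (fun j => R j \ A) ∧
      ∀ j, ((R (j + 1) \ A) \ (R j \ A)).Infinite := by
  obtain ⟨f, hf, hred⟩ := h
  obtain ⟨V, hV, hmono, hinf⟩ := exists_ceSet_monotone_infinite_sdiff
  choose v hv using hV
  obtain rfl : V = fun j => WSet (v j) := funext hv
  exact ⟨fun j => (phi (f (v j))).ran, fun j => ceSet_ran_phi _,
    fun i j hij => ran_sdiff_subset_of_WSet_subset hf hred (hmono hij),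
    fun j => infinite_ran_sdiff_of_infinite_WSet_sdiff hf hred (hmono j.le_succ) (hinf j)⟩

/-! ### Cohesive sets -/

/-- `C` is cohesive: no c.e. set splits it into two infinite parts. Maximal sets are the c.e. sets
with infinite cohesive complement; unlike in the usual definition, finite sets count as cohesive. -/
def Cohesive (C : Set ℕ) : Prop :=
  ∀ W, CeSet W → (C ∩ W).Finite ∨ (C \ W).Finite

theorem cohesive_compl_of_maximalSet {M : Set ℕ} (hM : MaximalSet M) : Cohesive Mᶜ := by
  intro W hW
  simpa only [Set.sdiff_eq, Set.inter_comm Mᶜ] using hM.2.2 W hW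

theorem exists_finite_sdiff_of_compl_subset_iUnion_cohesive {ι : Type*} [Finite ι]
    {C : ι → Set ℕ} (hC : ∀ i, Cohesive (C i)) {A : Set ℕ} (hA : Aᶜ ⊆ ⋃ i, C i) {R : ℕ → Set ℕ}
    (hR : ∀ j, CeSet (R j)) (hmono : Monotone fun j => R j \ A) :
    ∃ j, ((R (j + 1) \ A) \ (R j \ A)).Finite := by
  by_contra! hinf
  let gap (j : ℕ) : Set ℕ := (R (j + 1) \ A) \ (R j \ A)
  have hmeets (j : ℕ) : ∃ i, (gap j ∩ C i).Infinite := by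
    by_contra! hfin
    refine hinf j ((Set.finite_iUnion hfin).subset fun x hx => ?_)
    rw [← Set.inter_iUnion]
    exact ⟨hx, hA hx.1.2⟩
  choose i hi using hmeets
  have hne {j l : ℕ} (hjl : j < l) : i j ≠ i l := by
    intro heq
    rcases hC (i j) _ (hR (j + 1)) with hfin | hfin
    · exact hi j (hfin.subset fun x hx => ⟨hx.2, hx.1.1.1⟩)
    · refine hi l (hfin.subset fun x hx => ⟨heq ▸ hx.2, fun hxR => hx.1.2 ?_⟩)
      exact hmono hjl ⟨hxR, hx.1.1.2⟩
  obtain ⟨j, l, hjl, heq⟩ := Finite.exists_ne_map_eq_of_infinite i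
  exact hjl.lt_or_gt.elim (hne · heq) (hne · heq.symm)

theorem quasiMaximal_not_high_general {ι : Type*} [Finite ι] {C : ι → Set ℕ}
    (hC : ∀ i, Cohesive (C i)) {A : Set ℕ} (hA : Aᶜ ⊆ ⋃ i, C i) :
    ¬ Reduces eqCE (FSJump (EA A)) := by
  intro h
  obtain ⟨R, hR, hmono, hinf⟩ := exists_ceSet_chain_of_reduces h
  obtain ⟨j, hj⟩ := exists_finite_sdiff_of_compl_subset_iUnion_cohesive hC hA hR hmono
  exact hinf j hj

/-- If `A` is quasi-maximal, then `E_A` is not high for the computable FS-jump;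
equivalently, `=^{ce}` is not computably reducible to `(E_A)⁺`. -/
theorem quasiMaximal_not_high (A : Set ℕ) (hA : QuasiMaximalSet A) :
    ¬ (Reduces (FSJump (EA A)) eqCE ∧ Reduces eqCE (FSJump (EA A))) ∧
      ¬ Reduces eqCE (FSJump (EA A)) := by
  obtain ⟨_, M, hM, rfl⟩ := hA
  have hnot : ¬ Reduces eqCE (FSJump (EA (⋂ i, M i))) :=
    quasiMaximal_not_high_general (fun i => cohesive_compl_of_maximalSet (hM i))
      (Set.compl_iInter M).subset
  exact ⟨fun h => hnot h.2, hnot⟩
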